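/- If m > 14j, then under optimal play the (j,m)-balanced redistricting game ends in a tie: each player wins exactly j bins. -/

import Mathlib

/-- A move in the `(j,m)`-balanced redistricting game: a color
(`true` = white, `false` = black) together with one of the `2*j` bins. -/
abbrev Move (j : ℕ) := Bool × Fin (2*j)

/-- A strategy: given the history of moves (most recent first), produce a move. -/
abbrev Strat (j : ℕ) := List (Move j) → Move j

/-- The history after `n` moves when Player 1 (moving at even steps) plays `s1`
and Player 2 plays `s2`.  Most recent move first. -/
def hist (j : ℕ) (s1 s2 : Strat j) : ℕ → List (Move j)
  | 0 => []
  | n+1 =>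
      (if n % 2 = 0 then s1 (hist j s1 s2 n) else s2 (hist j s1 s2 n)) :: hist j s1 s2 n

/-- A move `mv` is legal after history `h`: a ball of that color remains
(there are `j*(2*m+1)` balls of each color) and the chosen bin is not full
(each bin has capacity `2*m+1`). -/
def legalMove (j m : ℕ) (h : List (Move j)) (mv : Move j) : Prop :=
  h.countP (fun x => x.1 == mv.1) < j * (2*m+1) ∧
  h.countP (fun x => x.2 == mv.2) < 2*m+1

/-- Player 1 always plays legally throughout the `2*j*(2*m+1)` moves. -/
def p1Legal (j m : ℕ) (s1 s2 : Strat j) : Prop :=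
  ∀ n < 2*j*(2*m+1), n % 2 = 0 →
    legalMove j m (hist j s1 s2 n) (s1 (hist j s1 s2 n))

/-- Player 2 always plays legally throughout the `2*j*(2*m+1)` moves. -/
def p2Legal (j m : ℕ) (s1 s2 : Strat j) : Prop :=
  ∀ n < 2*j*(2*m+1), n % 2 = 1 →
    legalMove j m (hist j s1 s2 n) (s2 (hist j s1 s2 n))

/-- Number of white balls in bin `b` according to history `h`. -/
def whitesIn (j : ℕ) (h : List (Move j)) (b : Fin (2*j)) : ℕ :=
  h.countP (fun x => x.1 == true && x.2 == b)

/-- Number of black balls in bin `b` according to history `h`. -/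
def blacksIn (j : ℕ) (h : List (Move j)) (b : Fin (2*j)) : ℕ :=
  h.countP (fun x => x.1 == false && x.2 == b)

/-- The final history: all `2*j*(2*m+1)` balls have been placed. -/
def finalHist (j m : ℕ) (s1 s2 : Strat j) : List (Move j) :=
  hist j s1 s2 (2*j*(2*m+1))

/-- Number of majority-white bins (at least `m+1` white balls). -/
def majWhiteCount (j m : ℕ) (h : List (Move j)) : ℕ :=
  (Finset.univ.filter (fun b : Fin (2*j) => m+1 ≤ whitesIn j h b)).card

/-- Number of majority-black bins (at least `m+1` black balls). -/
def majBlackCount (j m : ℕ) (h : List (Move j)) : ℕ :=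
  (Finset.univ.filter (fun b : Fin (2*j) => m+1 ≤ blacksIn j h b)).card

/-!
Player 2 answers every move by the move of the opposite color in the mirror image of the bin; the
two majority counts are then equal.

Until his bins are won, Player 1 plays white only. In the opening he restores any lead of his that
the opponent has just cancelled, and otherwise takes the lead in a new bin, until white leads in
`j` bins. From then on he dumps spare balls in the first bin `z`, until either `j - 1` black balls
have been played or the dump exceeds the black balls in it by `4 * j`. At that moment he can commit
himself to `j` led bins: twice the number of white balls they still need for a majority does not
exceed the number of white balls left, up to one. He keeps this balance, and the lead in these
bins, by playing in the bin where the opponent has just caught up, or in any bin still short of a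
majority.
-/

open Finset

section General

variable {α ι : Type*}

theorem exists_subset_card_nsmul_sum_le {M : Type*} [AddCommMonoid M] [LinearOrder M]
    [IsOrderedAddMonoid M] (f : ι → M) (s : Finset ι) :
    ∀ n ≤ #s, ∃ t ⊆ s, #t = n ∧ n • ∑ i ∈ s, f i ≤ #s • ∑ i ∈ t, f i := by
  classical
  induction s using Finset.induction_on_min_value f with
  | empty => exact fun n hn => ⟨∅, Subset.rfl, by simp_all⟩
  | insert a s ha hmin ih =>
    intro n hn
    rcases hn.eq_or_lt with rfl | hlt
    · exact ⟨insert a s, Subset.rfl, rfl, le_rfl⟩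
    rw [card_insert_of_notMem ha] at hlt ⊢
    obtain ⟨t, hts, rfl, ht⟩ := ih n (Nat.lt_succ_iff.mp hlt)
    refine ⟨t, hts.trans (subset_insert a s), rfl, ?_⟩
    calc #t • ∑ i ∈ insert a s, f i = #t • f a + #t • ∑ i ∈ s, f i := by
          rw [sum_insert ha, nsmul_add]
      _ ≤ ∑ i ∈ t, f i + #s • ∑ i ∈ t, f i :=
          add_le_add (card_nsmul_le_sum t f (f a) fun i hi => hmin i (hts hi)) ht
      _ = (#s + 1) • ∑ i ∈ t, f i := (succ_nsmul' _ _).symm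

theorem exists_mem_subset_sum_add_le (f : ι → ℕ) {s : Finset ι} {a : ι} {n : ℕ} (ha : a ∈ s)
    (hn : 2 ≤ n) (hns : n ≤ #s) (hs : #s ≤ 2 * n) :
    ∃ t ⊆ s, #t = n ∧ ∑ i ∈ s, f i + 2 * f a ≤ 3 * ∑ i ∈ t, f i := by
  classical
  have hcard := card_erase_add_one ha
  obtain ⟨t, hts, htn, ht⟩ := exists_subset_card_nsmul_sum_le f (s.erase a) (n - 1) (by omega)
  have hat : a ∉ t := fun h => notMem_erase a s (hts h)
  have hrest : ∑ i ∈ s.erase a, f i ≤ 3 * ∑ i ∈ t, f i := by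
    refine Nat.le_of_mul_le_mul_left (ht.trans ?_) (by omega : 0 < n - 1)
    calc #(s.erase a) * ∑ i ∈ t, f i ≤ ((n - 1) * 3) * ∑ i ∈ t, f i := by gcongr; omega
      _ = (n - 1) * (3 * ∑ i ∈ t, f i) := mul_assoc ..
  refine ⟨insert a t, insert_subset ha (hts.trans (erase_subset a s)), ?_, ?_⟩
  · rw [card_insert_of_notMem hat]; omega
  · rw [sum_insert hat, ← add_sum_erase s f ha]; omega

theorem sum_tsub_add_sum_le {w v : ι → ℕ} {c : ℕ} {s : Finset ι}
    (hvw : ∀ i ∈ s, v i ≤ w i) (hvc : ∀ i ∈ s, v i ≤ c) :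
    ∑ i ∈ s, (c - w i) + ∑ i ∈ s, v i ≤ #s * c := by
  rw [← sum_add_distrib]
  refine sum_le_card_nsmul s _ c fun i hi => ?_
  have := hvw i hi
  have := hvc i hi
  omega

theorem sum_countP_and_eq [Fintype ι] [DecidableEq ι] (p : α → Bool) (f : α → ι) (l : List α) :
    ∑ i, l.countP (fun x => p x && f x == i) = l.countP p := by
  induction l with
  | nil => simp
  | cons a l ih =>
    simp only [List.countP_cons, sum_add_distrib, ih]
    cases p a <;> simp

end General

section History

variable {j m : ℕ} {h : List (Move j)}

theorem whitesIn_cons (mv : Move j) (h : List (Move j)) (b : Fin (2 * j)) :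
    whitesIn j (mv :: h) b = whitesIn j h b + if mv = (true, b) then 1 else 0 := by
  simp [whitesIn, List.countP_cons, Prod.ext_iff]

theorem blacksIn_cons (mv : Move j) (h : List (Move j)) (b : Fin (2 * j)) :
    blacksIn j (mv :: h) b = blacksIn j h b + if mv = (false, b) then 1 else 0 := by
  simp [blacksIn, List.countP_cons, Prod.ext_iff]

theorem sum_whitesIn (h : List (Move j)) :
    ∑ b, whitesIn j h b = h.countP (fun x => x.1 == true) :=
  sum_countP_and_eq _ _ h

theorem sum_blacksIn (h : List (Move j)) :
    ∑ b, blacksIn j h b = h.countP (fun x => x.1 == false) :=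
  sum_countP_and_eq _ _ h

theorem whitesIn_add_blacksIn (h : List (Move j)) (b : Fin (2 * j)) :
    whitesIn j h b + blacksIn j h b = h.countP (fun x => x.2 == b) := by
  induction h with
  | nil => rfl
  | cons mv h ih =>
    have hball : (if mv = (true, b) then 1 else 0) + (if mv = (false, b) then 1 else 0) =
        if mv.2 == b then 1 else 0 := by
      obtain ⟨_ | _, c⟩ := mv <;> simp
    rw [whitesIn_cons, blacksIn_cons, List.countP_cons]
    omega

theorem sum_whitesIn_add_sum_blacksIn (h : List (Move j)) :
    ∑ b, whitesIn j h b + ∑ b, blacksIn j h b = h.length := by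
  rw [sum_whitesIn, sum_blacksIn, List.length_eq_countP_add_countP (fun x => x.1 == true)]
  simp

theorem legalMove_white_iff {b : Fin (2 * j)} :
    legalMove j m h (true, b) ↔
      ∑ i, whitesIn j h i < j * (2 * m + 1) ∧ whitesIn j h b + blacksIn j h b < 2 * m + 1 := by
  rw [sum_whitesIn, whitesIn_add_blacksIn, legalMove]

/-- The supply and capacity constraints on the history of a legal play, complete or not. -/
structure Feasible (j m : ℕ) (h : List (Move j)) : Prop where
  color_le : ∀ c, h.countP (fun x => x.1 == c) ≤ j * (2 * m + 1)
  bin_le : ∀ b, h.countP (fun x => x.2 == b) ≤ 2 * m + 1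

namespace Feasible

theorem nil : Feasible j m [] := ⟨fun _ => Nat.zero_le _, fun _ => Nat.zero_le _⟩

theorem cons {mv : Move j} (hf : Feasible j m h) (hmv : legalMove j m h mv) :
    Feasible j m (mv :: h) where
  color_le c := by
    have := hf.color_le c
    have := hmv.1
    rw [List.countP_cons]
    split_ifs with hc
    · rw [beq_iff_eq] at hc; subst hc; omega
    · omega
  bin_le b := by
    have := hf.bin_le b
    have := hmv.2
    rw [List.countP_cons]
    split_ifs with hb
    · rw [beq_iff_eq] at hb; subst hb; omega
    · omega

theorem sum_whitesIn_le (hf : Feasible j m h) : ∑ b, whitesIn j h b ≤ j * (2 * m + 1) :=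
  sum_whitesIn h ▸ hf.color_le true

theorem sum_whitesIn_eq (hf : Feasible j m h) (hlen : h.length = 2 * j * (2 * m + 1)) :
    ∑ b, whitesIn j h b = j * (2 * m + 1) := by
  refine hf.sum_whitesIn_le.antisymm ?_
  have hblack := sum_blacksIn h ▸ hf.color_le false
  have htotal := sum_whitesIn_add_sum_blacksIn h
  rw [hlen, mul_assoc] at htotal
  omega

theorem whitesIn_add_blacksIn_le (hf : Feasible j m h) (b : Fin (2 * j)) :
    whitesIn j h b + blacksIn j h b ≤ 2 * m + 1 :=
  whitesIn_add_blacksIn h b ▸ hf.bin_le b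

end Feasible

theorem exists_legalMove (hlt : h.length < 2 * j * (2 * m + 1)) : ∃ mv, legalMove j m h mv := by
  have hcolors : ∃ c, h.countP (fun x => x.1 == c) < j * (2 * m + 1) := by
    by_contra! hfull
    have := sum_whitesIn_add_sum_blacksIn h
    rw [sum_whitesIn, sum_blacksIn] at this
    linarith [hfull true, hfull false]
  have hbins : ∃ b, h.countP (fun x => x.2 == b) < 2 * m + 1 := by
    by_contra! hfull
    have := sum_le_sum fun b (_ : b ∈ univ) => hfull b
    rw [sum_const, card_univ, Fintype.card_fin, smul_eq_mul] at this
    simp_rw [← whitesIn_add_blacksIn, sum_add_distrib, sum_whitesIn_add_sum_blacksIn] at this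
    omega
  obtain ⟨c, hc⟩ := hcolors
  obtain ⟨b, hb⟩ := hbins
  exact ⟨(c, b), hc, hb⟩

theorem majWhiteCount_add_majBlackCount (hf : Feasible j m h)
    (hlen : h.length = 2 * j * (2 * m + 1)) :
    majWhiteCount j m h + majBlackCount j m h = 2 * j := by
  have hsum : ∑ b, (whitesIn j h b + blacksIn j h b) = ∑ _b : Fin (2 * j), (2 * m + 1) := by
    rw [sum_add_distrib, sum_whitesIn_add_sum_blacksIn, hlen]
    simp
  have hfull := (sum_eq_sum_iff_of_le fun b _ => hf.whitesIn_add_blacksIn_le b).mp hsum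
  have hblack : majBlackCount j m h = #{b : Fin (2 * j) | ¬ m + 1 ≤ whitesIn j h b} := by
    refine congrArg card (filter_congr fun b hb => ?_)
    have := hfull b hb
    omega
  rw [hblack, majWhiteCount, card_filter_add_card_filter_not, card_univ, Fintype.card_fin]

end History

section Play

variable {j m : ℕ} {s1 s2 : Strat j}

theorem hist_succ_of_even {n : ℕ} (hn : n % 2 = 0) :
    hist j s1 s2 (n + 1) = s1 (hist j s1 s2 n) :: hist j s1 s2 n := by
  rw [hist, if_pos hn]

theorem hist_succ_of_odd {n : ℕ} (hn : n % 2 = 1) :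
    hist j s1 s2 (n + 1) = s2 (hist j s1 s2 n) :: hist j s1 s2 n := by
  rw [hist, if_neg (by omega)]

theorem length_hist (n : ℕ) : (hist j s1 s2 n).length = n := by
  induction n with
  | zero => rfl
  | succ n ih => rw [hist, List.length_cons, ih]

theorem feasible_hist (h1 : p1Legal j m s1 s2) (h2 : p2Legal j m s1 s2) :
    ∀ n ≤ 2 * j * (2 * m + 1), Feasible j m (hist j s1 s2 n)
  | 0, _ => .nil
  | n + 1, hn => by
    have ih := feasible_hist h1 h2 n (Nat.le_of_succ_le hn)
    rcases Nat.mod_two_eq_zero_or_one n with hpar | hpar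
    · exact hist_succ_of_even hpar ▸ ih.cons (h1 n hn hpar)
    · exact hist_succ_of_odd hpar ▸ ih.cons (h2 n hn hpar)

theorem majWhiteCount_add_majBlackCount_finalHist (h1 : p1Legal j m s1 s2)
    (h2 : p2Legal j m s1 s2) :
    majWhiteCount j m (finalHist j m s1 s2) + majBlackCount j m (finalHist j m s1 s2) = 2 * j :=
  majWhiteCount_add_majBlackCount (feasible_hist h1 h2 _ le_rfl) (length_hist _)

/-- The strategy that moves into the set `I` of histories when a legal move does so, and otherwise
makes an arbitrary legal move. -/
noncomputable def aimStrat (j m : ℕ) [NeZero j] (I : List (Move j) → Prop) : Strat j := fun h =>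
  Classical.epsilon fun mv =>
    legalMove j m h mv ∧ ((∃ mv', legalMove j m h mv' ∧ I (mv' :: h)) → I (mv :: h))

/-- The player who has just moved into `I` can answer every legal move by a legal move back
into `I`, as long as the game is not over. -/
def Sustainable (j m : ℕ) (I : List (Move j) → Prop) : Prop :=
  ∀ ⦃h mv⦄, Feasible j m h → I h → legalMove j m h mv →
    (mv :: h).length < 2 * j * (2 * m + 1) →
    ∃ mv', legalMove j m (mv :: h) mv' ∧ I (mv' :: mv :: h)

variable [NeZero j] {I : List (Move j) → Prop}

theorem aimStrat_spec {h : List (Move j)} (hlt : h.length < 2 * j * (2 * m + 1)) :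
    legalMove j m h (aimStrat j m I h) ∧
      ((∃ mv, legalMove j m h mv ∧ I (mv :: h)) → I (aimStrat j m I h :: h)) := by
  refine Classical.epsilon_spec (p := fun mv =>
    legalMove j m h mv ∧ ((∃ mv', legalMove j m h mv' ∧ I (mv' :: h)) → I (mv :: h))) ?_
  by_cases hI : ∃ mv, legalMove j m h mv ∧ I (mv :: h)
  · exact hI.imp fun mv hmv => ⟨hmv.1, fun _ => hmv.2⟩
  · exact (exists_legalMove hlt).imp fun mv hmv => ⟨hmv, fun h' => absurd h' hI⟩

theorem p1Legal_aimStrat (s2 : Strat j) : p1Legal j m (aimStrat j m I) s2 := fun n hn _ =>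
  (aimStrat_spec ((length_hist n).trans_lt hn)).1

theorem p2Legal_aimStrat (s1 : Strat j) : p2Legal j m s1 (aimStrat j m I) := fun n hn _ =>
  (aimStrat_spec ((length_hist n).trans_lt hn)).1

theorem Sustainable.hist_odd (hI : Sustainable j m I) (hstart : ∃ mv, legalMove j m [] mv ∧ I [mv])
    (h2 : p2Legal j m (aimStrat j m I) s2) :
    ∀ n, 2 * n + 1 ≤ 2 * j * (2 * m + 1) → I (hist j (aimStrat j m I) s2 (2 * n + 1))
  | 0, hn => (aimStrat_spec hn).2 hstart
  | n + 1, hn => by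
    have ih := hI.hist_odd hstart h2 n (by omega)
    have hreply := hI (feasible_hist (p1Legal_aimStrat s2) h2 _ (by omega)) ih
      (h2 _ (by omega) (by omega)) (by rw [List.length_cons, length_hist]; omega)
    rw [← hist_succ_of_odd (by omega)] at hreply
    rw [hist_succ_of_even (by omega)]
    exact (aimStrat_spec (by rw [length_hist]; omega)).2 hreply

theorem Sustainable.hist_even (hI : Sustainable j m I) (hstart : I [])
    (h1 : p1Legal j m s1 (aimStrat j m I)) :
    ∀ n, 2 * n ≤ 2 * j * (2 * m + 1) → I (hist j s1 (aimStrat j m I) (2 * n))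
  | 0, _ => hstart
  | n + 1, hn => by
    have ih := hI.hist_even hstart h1 n (by omega)
    have hreply := hI (feasible_hist h1 (p2Legal_aimStrat s1) _ (by omega)) ih
      (h1 _ (by omega) (by omega)) (by rw [List.length_cons, length_hist]; omega)
    rw [← hist_succ_of_even (by omega)] at hreply
    rw [show 2 * (n + 1) = 2 * n + 1 + 1 by ring, hist_succ_of_odd (by omega)]
    exact (aimStrat_spec (by rw [length_hist]; omega)).2 hreply

end Play

section Mirror

variable {j m : ℕ} {h : List (Move j)}

/-- The move with the opposite color in the opposite bin. -/
def mirror (mv : Move j) : Move j := (!mv.1, mv.2.rev)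

theorem mirror_mirror (mv : Move j) : mirror (mirror mv) = mv := by
  simp [mirror]

/-- The history is invariant, up to the order of its moves, under swapping the colors and
reversing the row of bins. Player 2 maintains this. -/
def Mirrored (h : List (Move j)) : Prop := h.Perm (h.map mirror)

theorem Mirrored.cons_cons (hI : Mirrored h) (mv : Move j) : Mirrored (mirror mv :: mv :: h) := by
  simpa only [Mirrored, List.map_cons, mirror_mirror] using
    (List.Perm.swap mv (mirror mv) h).trans ((hI.cons _).cons _)

theorem Mirrored.countP_eq (hI : Mirrored h) (p : Move j → Bool) :
    h.countP p = h.countP (p ∘ mirror) := by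
  rw [List.Perm.countP_eq p hI, List.countP_map]

theorem rev_ne_self (b : Fin (2 * j)) : b.rev ≠ b := by
  intro hb
  have := congrArg Fin.val hb
  rw [Fin.val_rev] at this
  omega

theorem Mirrored.legalMove_mirror (hI : Mirrored h) {mv : Move j} (hmv : legalMove j m h mv) :
    legalMove j m (mv :: h) (mirror mv) := by
  have hcolor : h.countP (fun x => x.1 == mv.1) = h.countP (fun x => x.1 == (mirror mv).1) := by
    rw [hI.countP_eq]
    congr! 2 with x
    cases hx : x.1 <;> cases hc : mv.1 <;> simp [mirror, hx, hc]
  have hbin : h.countP (fun x => x.2 == mv.2) = h.countP (fun x => x.2 == (mirror mv).2) := by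
    rw [hI.countP_eq]
    congr! 2 with x
    rw [Bool.eq_iff_iff]
    simp [mirror, Fin.rev_eq_iff]
  constructor
  · rw [List.countP_cons, ← hcolor]
    simpa [mirror] using hmv.1
  · rw [List.countP_cons, ← hbin]
    simpa [mirror, (rev_ne_self mv.2).symm] using hmv.2

theorem sustainable_mirrored : Sustainable j m Mirrored := fun _ mv _ hI hmv _ =>
  ⟨mirror mv, hI.legalMove_mirror hmv, hI.cons_cons mv⟩

theorem Mirrored.blacksIn_rev (hI : Mirrored h) (b : Fin (2 * j)) :
    blacksIn j h b.rev = whitesIn j h b := by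
  rw [blacksIn, hI.countP_eq, whitesIn]
  congr! 2 with x
  rw [Bool.eq_iff_iff]
  simp [mirror]

theorem Mirrored.majWhiteCount_eq (hI : Mirrored h) :
    majWhiteCount j m h = majBlackCount j m h :=
  card_equiv Fin.revPerm fun b => by simp [hI.blacksIn_rev]

theorem le_majBlackCount_finalHist [NeZero j] {s1 : Strat j}
    (h1 : p1Legal j m s1 (aimStrat j m Mirrored)) :
    j ≤ majBlackCount j m (finalHist j m s1 (aimStrat j m Mirrored)) := by
  have hfinal : Mirrored (finalHist j m s1 (aimStrat j m Mirrored)) := by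
    rw [finalHist, mul_assoc]
    exact sustainable_mirrored.hist_even (.refl _) h1 _ (mul_assoc 2 j _).ge
  have htotal := majWhiteCount_add_majBlackCount_finalHist h1 (p2Legal_aimStrat s1)
  rw [hfinal.majWhiteCount_eq] at htotal
  omega

end Mirror

section Holding

variable {j m : ℕ} {h : List (Move j)} {mv : Move j} {A : Finset (Fin (2 * j))} {b₀ : Fin (2 * j)}

theorem whitesIn_le_cons (mv : Move j) (h : List (Move j)) (b : Fin (2 * j)) :
    whitesIn j h b ≤ whitesIn j (mv :: h) b := by
  rw [whitesIn_cons]; exact Nat.le_add_right _ _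

theorem whitesIn_cons_of_ne {b : Fin (2 * j)} (hb : b ≠ mv.2) :
    whitesIn j (mv :: h) b = whitesIn j h b := by
  rw [whitesIn_cons, if_neg fun hmv => hb (congrArg Prod.snd hmv).symm, add_zero]

theorem blacksIn_cons_of_ne {b : Fin (2 * j)} (hb : b ≠ mv.2) :
    blacksIn j (mv :: h) b = blacksIn j h b := by
  rw [blacksIn_cons, if_neg fun hmv => hb (congrArg Prod.snd hmv).symm, add_zero]

theorem blacksIn_cons_white (b c : Fin (2 * j)) :
    blacksIn j ((true, c) :: h) b = blacksIn j h b := by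
  simp [blacksIn_cons]

theorem whitesIn_cons_white (b c : Fin (2 * j)) :
    whitesIn j ((true, c) :: h) b = whitesIn j h b + if b = c then 1 else 0 := by
  simp [whitesIn_cons, eq_comm]

theorem sum_whitesIn_cons (mv : Move j) (h : List (Move j)) :
    ∑ b, whitesIn j (mv :: h) b = ∑ b, whitesIn j h b + if mv.1 then 1 else 0 := by
  simp [sum_whitesIn, List.countP_cons]

theorem blacksIn_lt_or_eq_cons {b : Fin (2 * j)} (hb : blacksIn j h b < whitesIn j h b) :
    blacksIn j (mv :: h) b < whitesIn j (mv :: h) b ∨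
      b = mv.2 ∧ blacksIn j (mv :: h) b = whitesIn j (mv :: h) b := by
  by_cases hbm : b = mv.2
  · have := whitesIn_le_cons mv h b
    have : blacksIn j (mv :: h) b ≤ blacksIn j h b + 1 := by
      rw [blacksIn_cons]; split_ifs <;> omega
    omega
  · rw [blacksIn_cons_of_ne hbm, whitesIn_cons_of_ne hbm]
    exact .inl hb

/-- Player 1 is committed to winning the `j` bins of `A`, and the opponent is to move. Each bin of
`A` is won or led, and twice the number of white balls still needed (none in a won bin, by truncated
subtraction) does not exceed the number of white balls left. -/
structure HoldWaiting (j m : ℕ) (A : Finset (Fin (2 * j))) (h : List (Move j)) : Prop where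
  card_eq : #A = j
  ahead : ∀ b ∈ A, m < whitesIn j h b ∨ blacksIn j h b < whitesIn j h b
  budget : ∑ b, whitesIn j h b + 2 * ∑ b ∈ A, (m + 1 - whitesIn j h b) ≤ j * (2 * m + 1)

/-- Player 1 is committed to the bins of `A` and is to move. Compared with `HoldWaiting`, the bin
`b₀` the opponent has just moved in may be level, and he may have used up one more white ball. -/
structure HoldMoving (j m : ℕ) (A : Finset (Fin (2 * j))) (b₀ : Fin (2 * j))
    (h : List (Move j)) : Prop where
  card_eq : #A = j
  ahead : ∀ b ∈ A, m < whitesIn j h b ∨ blacksIn j h b < whitesIn j h b ∨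
    b = b₀ ∧ blacksIn j h b = whitesIn j h b
  budget : ∑ b, whitesIn j h b + 2 * ∑ b ∈ A, (m + 1 - whitesIn j h b) ≤ j * (2 * m + 1) + 1

theorem HoldWaiting.cons (hw : HoldWaiting j m A h) (mv : Move j) :
    HoldMoving j m A mv.2 (mv :: h) where
  card_eq := hw.card_eq
  ahead b hb := (hw.ahead b hb).imp (·.trans_le (whitesIn_le_cons mv h b)) blacksIn_lt_or_eq_cons
  budget := by
    have hneed : ∑ b ∈ A, (m + 1 - whitesIn j (mv :: h) b) ≤ ∑ b ∈ A, (m + 1 - whitesIn j h b) :=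
      sum_le_sum fun b _ => Nat.sub_le_sub_left (whitesIn_le_cons mv h b) _
    have := hw.budget
    rw [sum_whitesIn_cons]
    split_ifs <;> omega

theorem lt_whitesIn_of_sum_tsub_eq_zero (hneed : ∑ b ∈ A, (m + 1 - whitesIn j h b) = 0) :
    ∀ b ∈ A, m < whitesIn j h b := fun b hb =>
  Nat.sub_eq_zero_iff_le.mp (sum_eq_zero_iff.mp hneed b hb)

namespace HoldMoving

theorem exists_urgent (hm : HoldMoving j m A b₀ h)
    (hneed : ∑ b ∈ A, (m + 1 - whitesIn j h b) ≠ 0) :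
    ∃ b ∈ A, whitesIn j h b ≤ m ∧ blacksIn j h b ≤ whitesIn j h b ∧
      ∀ b' ∈ A, b' ≠ b → m < whitesIn j h b' ∨ blacksIn j h b' < whitesIn j h b' := by
  by_cases hlevel : b₀ ∈ A ∧ whitesIn j h b₀ ≤ m ∧ blacksIn j h b₀ = whitesIn j h b₀
  · refine ⟨b₀, hlevel.1, hlevel.2.1, hlevel.2.2.le, fun b' hb' hne => ?_⟩
    exact (hm.ahead b' hb').imp_right fun h' => h'.resolve_right fun h'' => hne h''.1
  have hahead : ∀ b ∈ A, m < whitesIn j h b ∨ blacksIn j h b < whitesIn j h b := by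
    intro b hb
    rcases hm.ahead b hb with hwon | hlead | ⟨rfl, heq⟩
    · exact .inl hwon
    · exact .inr hlead
    · exact .inl (not_le.mp fun hle => hlevel ⟨hb, hle, heq⟩)
  obtain ⟨b, hb, hshort⟩ := exists_ne_zero_of_sum_ne_zero hneed
  have hle : whitesIn j h b ≤ m := by omega
  exact ⟨b, hb, hle, ((hahead b hb).resolve_left hle.not_gt).le, fun b' hb' _ => hahead b' hb'⟩

theorem reply (hm : HoldMoving j m A b₀ h) (hf : Feasible j m h)
    (hlt : h.length < 2 * j * (2 * m + 1)) :
    ∃ mv, legalMove j m h mv ∧ HoldWaiting j m A (mv :: h) := by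
  by_cases hneed : ∑ b ∈ A, (m + 1 - whitesIn j h b) = 0
  · obtain ⟨mv, hmv⟩ := exists_legalMove hlt
    have hwon : ∀ b ∈ A, m < whitesIn j (mv :: h) b := fun b hb =>
      (lt_whitesIn_of_sum_tsub_eq_zero hneed b hb).trans_le (whitesIn_le_cons mv h b)
    have hneed' : ∑ b ∈ A, (m + 1 - whitesIn j (mv :: h) b) = 0 :=
      sum_eq_zero fun b hb => Nat.sub_eq_zero_of_le (hwon b hb)
    refine ⟨mv, hmv, hm.card_eq, fun b hb => .inl (hwon b hb), ?_⟩
    rw [hneed']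
    exact (hf.cons hmv).sum_whitesIn_le
  obtain ⟨b, hb, hshort, hle, hahead⟩ := hm.exists_urgent hneed
  have hdecr : ∑ i ∈ A, (m + 1 - whitesIn j ((true, b) :: h) i) + 1 =
      ∑ i ∈ A, (m + 1 - whitesIn j h i) := by
    rw [← add_sum_erase A _ hb, ← add_sum_erase A _ hb, whitesIn_cons_white, if_pos rfl,
      sum_congr rfl fun i hi => by rw [whitesIn_cons_of_ne (ne_of_mem_erase hi)]]
    omega
  have := hm.budget
  refine ⟨(true, b), legalMove_white_iff.mpr ⟨by omega, by omega⟩, hm.card_eq, fun i hi => ?_, ?_⟩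
  · rw [whitesIn_cons_white, blacksIn_cons_white]
    split_ifs with hib
    · subst hib; omega
    · exact hahead i hi hib
  · rw [sum_whitesIn_cons, if_pos rfl]
    omega

theorem le_majWhiteCount (hm : HoldMoving j m A b₀ h)
    (hfull : ∑ b, whitesIn j h b = j * (2 * m + 1)) : j ≤ majWhiteCount j m h := by
  have hneed : ∑ b ∈ A, (m + 1 - whitesIn j h b) = 0 := by have := hm.budget; omega
  have hwon := lt_whitesIn_of_sum_tsub_eq_zero hneed
  exact hm.card_eq.ge.trans (card_le_card fun b hb => mem_filter.mpr ⟨mem_univ b, hwon b hb⟩)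

theorem of_credit {v : Fin (2 * j) → ℕ} (hA : #A = j)
    (hlead : ∀ b ∈ A, blacksIn j h b < whitesIn j h b)
    (hvw : ∀ b ∈ A, v b ≤ whitesIn j h b) (hvm : ∀ b ∈ A, v b ≤ m + 1)
    (hcredit : ∑ b, whitesIn j h b + j ≤ 2 * ∑ b ∈ A, v b + 1) :
    HoldMoving j m A b₀ h where
  card_eq := hA
  ahead b hb := .inr (.inl (hlead b hb))
  budget := by
    have hneed := sum_tsub_add_sum_le hvw hvm
    rw [hA] at hneed
    have : j * (2 * m + 1) + j = 2 * (j * (m + 1)) := by ring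
    omega

end HoldMoving

end Holding

section Opening

variable {j m : ℕ} {h : List (Move j)} {z b₀ c : Fin (2 * j)} {own : Fin (2 * j) → ℕ}

/-- The bins holding more white balls than black ones. -/
def leads (h : List (Move j)) : Finset (Fin (2 * j)) := {b | blacksIn j h b < whitesIn j h b}

/-- The bins holding fewer white balls than black ones. -/
def trails (h : List (Move j)) : Finset (Fin (2 * j)) := {b | whitesIn j h b < blacksIn j h b}

theorem mem_leads {b : Fin (2 * j)} : b ∈ leads h ↔ blacksIn j h b < whitesIn j h b := by
  simp [leads]

theorem mem_trails {b : Fin (2 * j)} : b ∈ trails h ↔ whitesIn j h b < blacksIn j h b := by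
  simp [trails]

theorem exists_blacksIn_eq_whitesIn (hlt : #(leads h) + #(trails h) < 2 * j) :
    ∃ c, blacksIn j h c = whitesIn j h c := by
  by_contra! hne
  have hcover : (univ : Finset (Fin (2 * j))) ⊆ leads h ∪ trails h := fun b _ =>
    mem_union.mpr ((hne b).lt_or_gt.imp mem_leads.mpr mem_trails.mpr)
  have := (card_le_card hcover).trans (card_union_le _ _)
  rw [card_univ, Fintype.card_fin] at this
  omega

theorem leads_cons_or_level (mv : Move j) (h : List (Move j)) :
    (#(leads h) ≤ #(leads (mv :: h)) ∧ #(trails (mv :: h)) ≤ #(trails h) + 1) ∨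
      (#(leads h) ≤ #(leads (mv :: h)) + 1 ∧ #(trails (mv :: h)) ≤ #(trails h) ∧
        ∃ c, blacksIn j (mv :: h) c = whitesIn j (mv :: h) c) := by
  have hleads : ∀ b ≠ mv.2, b ∈ leads (mv :: h) ↔ b ∈ leads h := fun b hb => by
    rw [mem_leads, mem_leads, whitesIn_cons_of_ne hb, blacksIn_cons_of_ne hb]
  have htrails : ∀ b ≠ mv.2, b ∈ trails (mv :: h) ↔ b ∈ trails h := fun b hb => by
    rw [mem_trails, mem_trails, whitesIn_cons_of_ne hb, blacksIn_cons_of_ne hb]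
  by_cases hcaught : mv.2 ∈ leads h ∧ mv.2 ∉ leads (mv :: h)
  · have hlevel := ((blacksIn_lt_or_eq_cons (mv := mv) (mem_leads.mp hcaught.1)).resolve_left
      (hcaught.2 ∘ mem_leads.mpr)).2
    refine .inr ⟨(card_le_card fun b hb => ?_).trans (card_insert_le mv.2 _),
      card_le_card fun b hb => ?_, mv.2, hlevel⟩
    · rw [mem_insert, or_iff_not_imp_left]
      exact fun hne => (hleads b hne).mpr hb
    · refine (htrails b ?_).mp hb
      rintro rfl
      exact (mem_trails.mp hb).ne' hlevel
  · refine .inl ⟨card_le_card fun b hb => ?_,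
      (card_le_card fun b hb => ?_).trans (card_insert_le mv.2 _)⟩
    · by_cases hne : b = mv.2
      · subst hne; exact not_not.mp fun hb' => hcaught ⟨hb, hb'⟩
      · exact (hleads b hne).mpr hb
    · rw [mem_insert, or_iff_not_imp_left]
      exact fun hne => (htrails b hne).mp hb

theorem leads_subset_cons_white : leads h ⊆ leads ((true, c) :: h) := fun b hb => by
  rw [mem_leads] at hb ⊢
  rw [blacksIn_cons_white]
  exact hb.trans_le (whitesIn_le_cons _ h b)

theorem card_leads_lt_cons_white (hc : blacksIn j h c = whitesIn j h c) :
    #(leads h) < #(leads ((true, c) :: h)) := by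
  have hc' : blacksIn j ((true, c) :: h) c < whitesIn j ((true, c) :: h) c := by
    rw [blacksIn_cons_white, whitesIn_cons_white, if_pos rfl, hc]
    exact Nat.lt_succ_self _
  exact card_lt_card (ssubset_iff_of_subset leads_subset_cons_white |>.mpr
    ⟨c, mem_leads.mpr hc', fun hlead => (mem_leads.mp hlead).ne hc⟩)

theorem card_trails_cons_white_le : #(trails ((true, c) :: h)) ≤ #(trails h) :=
  card_le_card fun b hb => by
    rw [mem_trails] at hb ⊢
    rw [blacksIn_cons_white] at hb
    exact (whitesIn_le_cons _ h b).trans_lt hb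

theorem sum_whitesIn_le_sum_leads_add :
    ∑ b, whitesIn j h b ≤ ∑ b ∈ leads h, whitesIn j h b + ∑ b, blacksIn j h b := by
  rw [← sum_add_sum_compl (leads h) (whitesIn j h)]
  gcongr
  calc ∑ b ∈ (leads h)ᶜ, whitesIn j h b ≤ ∑ b ∈ (leads h)ᶜ, blacksIn j h b :=
        sum_le_sum fun b hb => not_lt.mp (mem_leads.not.mp (mem_compl.mp hb))
    _ ≤ ∑ b, blacksIn j h b := sum_le_univ_sum_of_nonneg fun _ => Nat.zero_le _

/-- Player 1's account of the opening: `own b` is the number of white balls he has himself put in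
the bin `b`. The bin `z`, where he dumps spare balls, may exceed the black balls in it by `4 * j`,
the other bins by one only. -/
structure Ledger (j m : ℕ) (z : Fin (2 * j)) (own : Fin (2 * j) → ℕ)
    (h : List (Move j)) : Prop where
  own_le_whitesIn : ∀ b, own b ≤ whitesIn j h b
  own_le : ∀ b, own b ≤ m + 1
  own_le_blacksIn : ∀ b ≠ z, own b ≤ blacksIn j h b + 1
  own_dump_le : own z ≤ blacksIn j h z + 4 * j
  own_dump_pos : 0 < own z
  card_le : #{b | 0 < own b} ≤ j

/-- A position of the opening with the opponent to move: Player 1 has put all his white balls in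
bins where white leads, and either white leads in `j` bins or in more bins than it trails, so that
a level bin will be available. -/
structure OpeningWaiting (j m : ℕ) (z : Fin (2 * j)) (own : Fin (2 * j) → ℕ)
    (h : List (Move j)) : Prop extends Ledger j m z own h where
  length_eq : h.length + 1 = 2 * ∑ b, own b
  ahead : ∀ b, 0 < own b → blacksIn j h b < whitesIn j h b
  leads_spec : #(trails h) < #(leads h) ∨ j ≤ #(leads h)

/-- The positions a move of the opponent in the bin `b₀` can produce from `OpeningWaiting`. -/
structure OpeningMoving (j m : ℕ) (z : Fin (2 * j)) (own : Fin (2 * j) → ℕ) (b₀ : Fin (2 * j))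
    (h : List (Move j)) : Prop extends Ledger j m z own h where
  length_eq : h.length = 2 * ∑ b, own b
  ahead : ∀ b, 0 < own b →
    blacksIn j h b < whitesIn j h b ∨ b = b₀ ∧ blacksIn j h b = whitesIn j h b
  leads_spec : #(trails h) ≤ #(leads h) ∨ j ≤ #(leads h) + 1
  level_spec : j ≤ #(leads h) ∨ ∃ c, blacksIn j h c = whitesIn j h c

namespace Ledger

theorem cons (hl : Ledger j m z own h) (mv : Move j) : Ledger j m z own (mv :: h) := by
  have hblack : ∀ b, blacksIn j h b ≤ blacksIn j (mv :: h) b := fun b => by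
    rw [blacksIn_cons]; exact Nat.le_add_right _ _
  exact {
    own_le_whitesIn b := (hl.own_le_whitesIn b).trans (whitesIn_le_cons mv h b)
    own_le := hl.own_le
    own_le_blacksIn b hb := (hl.own_le_blacksIn b hb).trans (Nat.succ_le_succ (hblack b))
    own_dump_le := hl.own_dump_le.trans (Nat.add_le_add_right (hblack z) _)
    own_dump_pos := hl.own_dump_pos
    card_le := hl.card_le }

theorem card_own_add_single_le (hl : Ledger j m z own h) (hnew : 0 < own c ∨ #{b | 0 < own b} < j) :
    #{b | 0 < (own + Pi.single c 1 : Fin (2 * j) → ℕ) b} ≤ j := by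
  have hsub : ({b | 0 < (own + Pi.single c 1 : Fin (2 * j) → ℕ) b} : Finset (Fin (2 * j))) ⊆
      insert c ({b | 0 < own b} : Finset (Fin (2 * j))) := by
    intro b hb
    by_cases hbc : b = c <;> simp_all
  rcases hnew with hc | hlt
  · rw [insert_eq_of_mem (by simpa using hc)] at hsub
    exact (card_le_card hsub).trans hl.card_le
  · exact ((card_le_card hsub).trans (card_insert_le _ _)).trans hlt

theorem play (hl : Ledger j m z own h) (hnew : 0 < own c ∨ #{b | 0 < own b} < j)
    (hcm : own c ≤ m) (hc : c ≠ z → own c ≤ blacksIn j h c)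
    (hz : c = z → own z < blacksIn j h z + 4 * j) :
    Ledger j m z (own + Pi.single c 1) ((true, c) :: h) where
  own_le_whitesIn b := by
    have := hl.own_le_whitesIn b
    rw [Pi.add_apply, Pi.single_apply, whitesIn_cons_white]
    split_ifs <;> omega
  own_le b := by
    rw [Pi.add_apply, Pi.single_apply]
    split_ifs with hbc
    · subst hbc; omega
    · exact hl.own_le b
  own_le_blacksIn b hb := by
    rw [Pi.add_apply, Pi.single_apply, blacksIn_cons_white]
    split_ifs with hbc
    · subst hbc; exact Nat.succ_le_succ (hc hb)
    · exact hl.own_le_blacksIn b hb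
  own_dump_le := by
    rw [Pi.add_apply, Pi.single_apply, blacksIn_cons_white]
    split_ifs with hzc
    · exact hz hzc.symm
    · exact hl.own_dump_le
  own_dump_pos := hl.own_dump_pos.trans_le (Nat.le_add_right _ _)
  card_le := hl.card_own_add_single_le hnew

theorem sum_own_lt (hl : Ledger j m z own h) : ∑ b, own b < ∑ b, blacksIn j h b + 5 * j := by
  have hbin : ∀ b, own b + (if b = z then 1 else 0) ≤
      blacksIn j h b + (if 0 < own b then 1 else 0) + if b = z then 4 * j else 0 := by
    intro b
    by_cases hbz : b = z
    · subst hbz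
      have := hl.own_dump_le
      have := hl.own_dump_pos
      rw [if_pos rfl, if_pos hl.own_dump_pos, if_pos rfl]
      omega
    · have := hl.own_le_blacksIn b hbz
      split_ifs <;> omega
  have hsum := sum_le_sum fun b (_ : b ∈ univ) => hbin b
  simp only [sum_add_distrib, sum_ite_eq', mem_univ, if_true, ← card_filter] at hsum
  have := hl.card_le
  omega

theorem sum_own_le (hl : Ledger j m z own h) : ∑ b, own b ≤ j * (m + 1) := by
  have hsupp : ∑ b, own b = ∑ b with 0 < own b, own b := by
    rw [sum_filter]
    exact sum_congr rfl fun b _ => by split_ifs <;> omega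
  calc ∑ b, own b ≤ #{b | 0 < own b} * (m + 1) :=
        hsupp ▸ sum_le_card_nsmul _ _ _ fun b _ => hl.own_le b
    _ ≤ j * (m + 1) := Nat.mul_le_mul_right _ hl.card_le

end Ledger

theorem OpeningWaiting.cons (ho : OpeningWaiting j m z own h) (mv : Move j) :
    OpeningMoving j m z own mv.2 (mv :: h) where
  toLedger := ho.toLedger.cons mv
  length_eq := ho.length_eq
  ahead b hb := blacksIn_lt_or_eq_cons (ho.ahead b hb)
  leads_spec := by
    have := ho.leads_spec
    rcases leads_cons_or_level mv h with hkeep | hlevel <;> omega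
  level_spec := by
    rw [or_iff_not_imp_left]
    intro hlt
    have := ho.leads_spec
    rcases leads_cons_or_level mv h with hkeep | hlevel
    · exact exists_blacksIn_eq_whitesIn (by omega)
    · exact hlevel.2.2

namespace OpeningMoving

theorem sum_whitesIn_lt (ho : OpeningMoving j m z own b₀ h) (hm : 5 ≤ m) :
    ∑ b, whitesIn j h b < j * (2 * m + 1) := by
  have := ho.sum_own_lt
  have := ho.sum_own_le
  have := ho.length_eq
  have := sum_whitesIn_add_sum_blacksIn h
  have := Nat.mul_le_mul_left j hm
  rw [mul_add_one] at *
  rw [mul_left_comm]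
  omega

theorem play_level (ho : OpeningMoving j m z own b₀ h) (hj : 0 < j) (hf : Feasible j m h)
    (hc : blacksIn j h c = whitesIn j h c) (hnew : 0 < own c ∨ #{b | 0 < own b} < j)
    (hahead : ∀ b ≠ c, 0 < own b → blacksIn j h b < whitesIn j h b) :
    OpeningWaiting j m z (own + Pi.single c 1) ((true, c) :: h) := by
  have hown := ho.own_le_whitesIn
  have hle := hf.whitesIn_add_blacksIn_le c
  have hmore := card_leads_lt_cons_white hc
  have hless := card_trails_cons_white_le (h := h) (c := c)
  refine ⟨ho.toLedger.play hnew ?_ ?_ ?_, ?_, fun b hb => ?_, ?_⟩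
  · have := hown c; omega
  · exact fun _ => hc ▸ hown c
  · rintro rfl; have := hown c; omega
  · rw [List.length_cons, ho.length_eq]
    simp [sum_add_distrib, mul_add]
  · rw [blacksIn_cons_white, whitesIn_cons_white]
    split_ifs with hbc
    · subst hbc; omega
    · exact hahead b hbc (by simpa [hbc] using hb)
  · have := ho.leads_spec
    omega

theorem play_dump (ho : OpeningMoving j m z own b₀ h) (hm : own z ≤ m)
    (hahead : ∀ b, 0 < own b → blacksIn j h b < whitesIn j h b) (hleads : j ≤ #(leads h))
    (hz : own z < blacksIn j h z + 4 * j) :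
    OpeningWaiting j m z (own + Pi.single z 1) ((true, z) :: h) := by
  refine ⟨ho.toLedger.play (.inl ho.own_dump_pos) hm (absurd rfl) fun _ => hz, ?_, fun b hb => ?_,
    .inr (hleads.trans (card_le_card leads_subset_cons_white))⟩
  · rw [List.length_cons, ho.length_eq]
    simp [sum_add_distrib, mul_add]
  · rw [blacksIn_cons_white]
    refine (hahead b ?_).trans_le (whitesIn_le_cons _ h b)
    by_cases hbz : b = z
    · exact hbz ▸ ho.own_dump_pos
    · simpa [hbz] using hb

theorem holdMoving_of_le_sum_blacksIn (ho : OpeningMoving j m z own b₀ h)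
    (hahead : ∀ b, 0 < own b → blacksIn j h b < whitesIn j h b) (hleads : j ≤ #(leads h))
    (hblack : j ≤ ∑ b, blacksIn j h b + 1) : ∃ A, HoldMoving j m A b₀ h := by
  obtain ⟨A, hown, hA, hcard⟩ := exists_subsuperset_card_eq
    (fun b hb => mem_leads.mpr (hahead b (mem_filter.mp hb).2)) ho.card_le hleads
  refine ⟨A, .of_credit hcard (fun b hb => mem_leads.mp (hA hb)) (fun b _ => ho.own_le_whitesIn b)
    (fun b _ => ho.own_le b) ?_⟩
  have hcredit : ∑ b ∈ A, own b = ∑ b, own b :=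
    sum_subset (subset_univ A) fun b _ hb => by
      by_contra hpos
      exact hb (hown (mem_filter.mpr ⟨mem_univ b, Nat.pos_of_ne_zero hpos⟩))
  have := sum_whitesIn_add_sum_blacksIn h
  have := ho.length_eq
  omega

end OpeningMoving

-- The bin `z` and the `j - 1` richest other led bins together hold a third of the white balls in
-- all led bins plus two thirds of those in `z`. Since at most `11 * j` white balls have been
-- played, this is about half of them once `z` holds `4 * j`.
theorem exists_holdMoving_of_dump_full (hm : 11 * j ≤ m) (hz : z ∈ leads h)
    (hleads : j ≤ #(leads h)) (hblack : ∑ b, blacksIn j h b + 1 < j)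
    (hdump : 4 * j ≤ whitesIn j h z)
    (hwhite : ∑ b, whitesIn j h b + 2 ≤ ∑ b, blacksIn j h b + 10 * j) :
    ∃ A, HoldMoving j m A b₀ h := by
  obtain ⟨A, hA, hcard, hsum⟩ := exists_mem_subset_sum_add_le (whitesIn j h) hz (by omega) hleads
    ((card_le_univ _).trans_eq (Fintype.card_fin _))
  have hsmall : ∀ b, whitesIn j h b ≤ m + 1 := fun b => by
    have := single_le_sum (fun i _ => Nat.zero_le (whitesIn j h i)) (mem_univ b)
    omega
  refine ⟨A, .of_credit hcard (fun b hb => mem_leads.mp (hA hb)) (fun _ _ => le_rfl)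
    (fun b _ => hsmall b) ?_⟩
  have := sum_whitesIn_le_sum_leads_add (h := h)
  omega

/-- What Player 1 maintains: the opening, played with the dump bin `z`, followed by the defence of
`j` bins. -/
def Player1Inv (j m : ℕ) (z : Fin (2 * j)) (h : List (Move j)) : Prop :=
  (∃ own, OpeningWaiting j m z own h) ∨ ∃ A, HoldWaiting j m A h

namespace OpeningMoving

theorem dump_or_hold (ho : OpeningMoving j m z own b₀ h) (hm : 11 * j ≤ m) (hj : 0 < j)
    (hahead : ∀ b, 0 < own b → blacksIn j h b < whitesIn j h b) (hleads : j ≤ #(leads h)) :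
    (legalMove j m h (true, z) ∧ OpeningWaiting j m z (own + Pi.single z 1) ((true, z) :: h)) ∨
      ∃ A, HoldMoving j m A b₀ h := by
  by_cases hblack : j ≤ ∑ b, blacksIn j h b + 1
  · exact .inr (ho.holdMoving_of_le_sum_blacksIn hahead hleads hblack)
  have hown := ho.sum_own_lt
  have htotal := sum_whitesIn_add_sum_blacksIn h
  rw [ho.length_eq] at htotal
  have hblack_z := single_le_sum (fun i _ => Nat.zero_le (blacksIn j h i)) (mem_univ z)
  have hwhite_z := single_le_sum (fun i _ => Nat.zero_le (whitesIn j h i)) (mem_univ z)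
  have hown_z := ho.own_le_whitesIn z
  by_cases hdump : own z < blacksIn j h z + 4 * j
  · exact .inl ⟨legalMove_white_iff.mpr ⟨ho.sum_whitesIn_lt (by omega), by omega⟩,
      ho.play_dump (by omega) hahead hleads hdump⟩
  · exact .inr (exists_holdMoving_of_dump_full hm (mem_leads.mpr (hahead z ho.own_dump_pos)) hleads
      (by omega) (by omega) (by omega))

theorem reply (ho : OpeningMoving j m z own b₀ h) (hm : 11 * j ≤ m) (hj : 0 < j)
    (hf : Feasible j m h) (hlt : h.length < 2 * j * (2 * m + 1)) :
    ∃ mv, legalMove j m h mv ∧ Player1Inv j m z (mv :: h) := by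
  have hlevel : ∀ c, blacksIn j h c = whitesIn j h c → legalMove j m h (true, c) := fun c hc => by
    have := hf.whitesIn_add_blacksIn_le c
    exact legalMove_white_iff.mpr ⟨ho.sum_whitesIn_lt (by omega), by omega⟩
  by_cases hcaught : 0 < own b₀ ∧ blacksIn j h b₀ = whitesIn j h b₀
  · exact ⟨_, hlevel b₀ hcaught.2, .inl ⟨_, ho.play_level hj hf hcaught.2 (.inl hcaught.1)
      fun b hne hb => (ho.ahead b hb).resolve_right fun h' => hne h'.1⟩⟩
  have hahead : ∀ b, 0 < own b → blacksIn j h b < whitesIn j h b := fun b hb =>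
    (ho.ahead b hb).resolve_right fun ⟨h', heq⟩ => hcaught (h' ▸ ⟨hb, heq⟩)
  rcases lt_or_ge #(leads h) j with hleads | hleads
  · obtain ⟨c, hc⟩ := ho.level_spec.resolve_left hleads.not_ge
    have hsupp : #{b | 0 < own b} ≤ #(leads h) :=
      card_le_card fun b hb => mem_leads.mpr (hahead b (mem_filter.mp hb).2)
    exact ⟨_, hlevel c hc, .inl ⟨_, ho.play_level hj hf hc (.inr (hsupp.trans_lt hleads))
      fun b _ hb => hahead b hb⟩⟩
  · rcases ho.dump_or_hold hm hj hahead hleads with ⟨hmv, ho'⟩ | ⟨A, hA⟩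
    · exact ⟨_, hmv, .inl ⟨_, ho'⟩⟩
    · exact (hA.reply hf hlt).imp fun mv hmv => ⟨hmv.1, .inr ⟨A, hmv.2⟩⟩

end OpeningMoving

theorem Player1Inv.le_majWhiteCount_cons {mv : Move j} (hI : Player1Inv j m z h) (hm : 5 ≤ m)
    (hfull : ∑ b, whitesIn j (mv :: h) b = j * (2 * m + 1)) : j ≤ majWhiteCount j m (mv :: h) := by
  rcases hI with ⟨own, ho⟩ | ⟨A, hA⟩
  · exact absurd hfull ((ho.cons mv).sum_whitesIn_lt hm).ne
  · exact (hA.cons mv).le_majWhiteCount hfull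

theorem sustainable_player1Inv (hm : 11 * j ≤ m) (hj : 0 < j) (z : Fin (2 * j)) :
    Sustainable j m (Player1Inv j m z) := by
  rintro h mv hf (⟨own, ho⟩ | ⟨A, hA⟩) hmv hlt
  · exact (ho.cons mv).reply hm hj (hf.cons hmv) hlt
  · obtain ⟨mv', hmv', hA'⟩ := (hA.cons mv).reply (hf.cons hmv) hlt
    exact ⟨mv', hmv', .inr ⟨A, hA'⟩⟩

theorem openingWaiting_singleton (hj : 0 < j) (z : Fin (2 * j)) :
    OpeningWaiting j m z (Pi.single z 1) [(true, z)] where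
  own_le_whitesIn b := by simp [whitesIn_cons_white, Pi.single_apply]
  own_le b := by rw [Pi.single_apply]; split_ifs <;> omega
  own_le_blacksIn b hb := by simp [hb]
  own_dump_le := by rw [Pi.single_eq_same]; omega
  own_dump_pos := by simp
  card_le := by
    refine (card_le_card (t := {z}) fun b hb => ?_).trans hj
    by_contra hne
    simp_all
  length_eq := by simp
  ahead b hb := by
    have hbz : b = z := by by_contra hne; simp [hne] at hb
    simp [hbz, whitesIn_cons_white, blacksIn]
  leads_spec := by
    have htrails : trails ([] : List (Move j)) = ∅ := by
      simp [trails, whitesIn, blacksIn]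
    have hle := card_trails_cons_white_le (h := []) (c := z)
    have hlt := card_leads_lt_cons_white (h := []) (c := z) rfl
    rw [htrails, card_empty] at hle
    omega

theorem le_majWhiteCount_finalHist [NeZero j] (hm : 11 * j ≤ m) (z : Fin (2 * j)) {s2 : Strat j}
    (h2 : p2Legal j m (aimStrat j m (Player1Inv j m z)) s2) :
    j ≤ majWhiteCount j m (finalHist j m (aimStrat j m (Player1Inv j m z)) s2) := by
  have hj : 0 < j := Nat.pos_of_neZero j
  have hstart : ∃ mv, legalMove j m [] mv ∧ Player1Inv j m z [mv] :=
    ⟨(true, z), ⟨by simp [hj], by simp⟩, .inl ⟨_, openingWaiting_singleton hj z⟩⟩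
  have hwhite := (feasible_hist (p1Legal_aimStrat s2) h2 _ le_rfl).sum_whitesIn_eq (length_hist _)
  obtain ⟨N, hN⟩ : ∃ N, j * (2 * m + 1) = N + 1 := Nat.exists_eq_succ_of_ne_zero (by positivity)
  have hlength : 2 * j * (2 * m + 1) = 2 * N + 1 + 1 := by rw [mul_assoc, hN]; ring
  have hlast := (sustainable_player1Inv hm hj z).hist_odd hstart h2 N (by omega)
  rw [hlength, hist_succ_of_odd (by omega)] at hwhite
  rw [finalHist, hlength, hist_succ_of_odd (by omega)]
  exact hlast.le_majWhiteCount_cons (by omega) hwhite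

end Opening

theorem optimal_play_is_tie_general (j m : ℕ) (hj : 0 < j) (hm : 11 * j ≤ m) :
    ∃ s1 s2 : Strat j,
      (∀ s2' : Strat j, p2Legal j m s1 s2' →
        p1Legal j m s1 s2' ∧ j ≤ majWhiteCount j m (finalHist j m s1 s2')) ∧
      (∀ s1' : Strat j, p1Legal j m s1' s2 →
        p2Legal j m s1' s2 ∧ j ≤ majBlackCount j m (finalHist j m s1' s2)) ∧
      majWhiteCount j m (finalHist j m s1 s2) = j ∧
      majBlackCount j m (finalHist j m s1 s2) = j := by
  have : NeZero j := ⟨hj.ne'⟩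
  let s1 := aimStrat j m (Player1Inv j m 0)
  let s2 := aimStrat j m Mirrored
  have h1 : p1Legal j m s1 s2 := p1Legal_aimStrat s2
  have h2 : p2Legal j m s1 s2 := p2Legal_aimStrat s1
  have hwhite : j ≤ majWhiteCount j m (finalHist j m s1 s2) := le_majWhiteCount_finalHist hm 0 h2
  have hblack : j ≤ majBlackCount j m (finalHist j m s1 s2) := le_majBlackCount_finalHist h1
  have htotal := majWhiteCount_add_majBlackCount_finalHist h1 h2
  exact ⟨s1, s2, fun s2' h2' => ⟨p1Legal_aimStrat s2', le_majWhiteCount_finalHist hm 0 h2'⟩,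
    fun s1' h1' => ⟨p2Legal_aimStrat s1', le_majBlackCount_finalHist h1'⟩, by omega, by omega⟩

/-- **Main result.** If `m > 14*j`, then under optimal play the
`(j,m)`-balanced redistricting game ends in a tie: Player 1 has a strategy
guaranteeing at least `j` majority-white bins, Player 2 has a strategy
guaranteeing at least `j` majority-black bins, and when these strategies face
each other the game ends with exactly `j` majority-white and exactly `j`
majority-black bins. -/
theorem optimal_play_is_tie (j m : ℕ) (hj : 0 < j) (hm : 14*j < m) :
    ∃ s1 s2 : Strat j,
      (∀ s2' : Strat j, p2Legal j m s1 s2' →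
        p1Legal j m s1 s2' ∧ j ≤ majWhiteCount j m (finalHist j m s1 s2')) ∧
      (∀ s1' : Strat j, p1Legal j m s1' s2 →
        p2Legal j m s1' s2 ∧ j ≤ majBlackCount j m (finalHist j m s1' s2)) ∧
      majWhiteCount j m (finalHist j m s1 s2) = j ∧
      majBlackCount j m (finalHist j m s1 s2) = j :=
  optimal_play_is_tie_general j m hj (by omega)
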